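/- If the initial route valuation of the CULO model is s^0 = 0 — so that the initial strategy p^0 assigns equal probability 1/|K_w| to every route serving each OD pair w — and the CULO iterates converge to a point p* ∈ P*, then p* is the MEUE strategy, i.e., the unique minimizer of the negative entropy φ over P*. -/

import Mathlib

/-!
In terms of link flows the equilibrium condition is a variational inequality for `u`, so strict
monotonicity makes all equilibria share one link flow. Started from `s⁰ = 0`, every valuation `sᵗ`
is a sum of route costs and hence of the form `Λᵀ v`. For such valuations the cross entropy
`-∑ₖ qₖ pₖ log pᵗₖ` of a strategy `p` depends only on its link flow `bΛ p`, and therefore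
`φ(p') - φ(p*) = D(p', pᵗ) - D(p*, pᵗ) ≥ -D(p*, pᵗ)` whenever `p'` has the link flow of `p*`.
The right-hand side tends to `0`, so `p*` minimizes `φ` among the strategies with its link flow;
these form a convex set, on which `φ` is strictly convex.
-/

open Matrix Filter Finset Topology

noncomputable section

variable {A W K : Type*}

/-- OD-route incidence matrix `Σ`: each column is the standard unit vector at `od k`
(every route `k` serves exactly one OD pair, `od k`). -/
def Sig [DecidableEq W] (od : K → W) : Matrix W K ℝ :=
  Matrix.of fun w k => if od k = w then 1 else 0

/-- The strategy set `P = {p : p ≥ 0, Σ p = 1}`. -/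
def Pset [Fintype K] [DecidableEq W] (od : K → W) : Set (K → ℝ) :=
  {p | (∀ k, 0 ≤ p k) ∧ ∀ w : W, (Sig od).mulVec p w = 1}

/-- `q = Σᵀ d`. -/
def qvec [Fintype W] [DecidableEq W] (od : K → W) (d : W → ℝ) : K → ℝ :=
  (Sig od)ᵀ.mulVec d

/-- `bΛ = Λ · diag q`. -/
def bLam [Fintype K] [Fintype W] [DecidableEq W] [DecidableEq K]
    (Λ : Matrix A K ℝ) (od : K → W) (d : W → ℝ) : Matrix A K ℝ :=
  Λ * Matrix.diagonal (qvec od d)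

/-- The link-flow set `X = {bΛ p : p ∈ P}`. -/
def Xset [Fintype K] [Fintype W] [DecidableEq W] [DecidableEq K]
    (Λ : Matrix A K ℝ) (od : K → W) (d : W → ℝ) : Set (A → ℝ) :=
  (fun p => (bLam Λ od d).mulVec p) '' Pset od

/-- The route-cost map `c(p) = Λᵀ u(bΛ p)`. -/
def routeCost [Fintype A] [Fintype K] [Fintype W] [DecidableEq W] [DecidableEq K]
    (Λ : Matrix A K ℝ) (od : K → W) (d : W → ℝ)
    (u : (A → ℝ) → (A → ℝ)) : (K → ℝ) → (K → ℝ) :=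
  fun p => Λᵀ.mulVec (u ((bLam Λ od d).mulVec p))

/-- The UE set `P*`: solutions of the variational inequality. -/
def UEset [Fintype A] [Fintype K] [Fintype W] [DecidableEq W] [DecidableEq K]
    (Λ : Matrix A K ℝ) (od : K → W) (d : W → ℝ)
    (u : (A → ℝ) → (A → ℝ)) : Set (K → ℝ) :=
  {p | p ∈ Pset od ∧ ∀ p' ∈ Pset od, 0 ≤ routeCost Λ od d u p ⬝ᵥ (p' - p)}

/-- The logit map `q_r`. -/
def logit [Fintype K] [DecidableEq W] (od : K → W) (r : ℝ) (s : K → ℝ) : K → ℝ :=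
  fun k => Real.exp (-r * s k) /
    ∑ k' ∈ Finset.univ.filter (fun k' => od k' = od k), Real.exp (-r * s k')

/-- The negative entropy `φ(p) = ∑ₖ qₖ pₖ log pₖ` (with `0·log 0 = 0`). -/
def negEnt [Fintype K] [Fintype W] [DecidableEq W] (od : K → W) (d : W → ℝ)
    (p : K → ℝ) : ℝ :=
  ∑ k, qvec od d k * (p k * Real.log (p k))

/-- The KL divergence `D(p, p') = ∑ₖ qₖ pₖ (log pₖ − log p'ₖ)` (with `0·log 0 = 0`). -/
def KLdiv [Fintype K] [Fintype W] [DecidableEq W] (od : K → W) (d : W → ℝ)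
    (p p' : K → ℝ) : ℝ :=
  ∑ k, qvec od d k * (p k * (Real.log (p k) - Real.log (p' k)))

lemma sub_le_mul_log_sub_log {x y : ℝ} (hx : 0 ≤ x) (hy : 0 < y) :
    x - y ≤ x * (Real.log x - Real.log y) := by
  rcases hx.eq_or_lt with rfl | hx
  · simpa using hy.le
  calc x - y = x * (1 - (x / y)⁻¹) := by field_simp
    _ ≤ x * Real.log (x / y) := by
        gcongr
        exact Real.one_sub_inv_le_log_of_pos (div_pos hx hy)
    _ = x * (Real.log x - Real.log y) := by rw [Real.log_div hx.ne' hy.ne']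

lemma strictConvexOn_sum_mul_comp_apply [Fintype K] {q : K → ℝ} (hq : ∀ k, 0 < q k)
    {S : Set ℝ} {f : ℝ → ℝ} (hf : StrictConvexOn ℝ S f) :
    StrictConvexOn ℝ (Set.univ.pi fun _ : K => S) fun p => ∑ k, q k * f (p k) := by
  refine ⟨convex_pi fun _ _ => hf.1, fun p hp p' hp' hne a b ha hb hab => ?_⟩
  obtain ⟨j, hj⟩ := Function.ne_iff.1 hne
  have hle : ∀ k, f (a • p k + b • p' k) ≤ a • f (p k) + b • f (p' k) := fun k =>
    hf.convexOn.2 (hp k trivial) (hp' k trivial) ha.le hb.le hab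
  have hlt : f (a • p j + b • p' j) < a • f (p j) + b • f (p' j) :=
    hf.2 (hp j trivial) (hp' j trivial) hj ha hb hab
  calc ∑ k, q k * f (a • p k + b • p' k)
      < ∑ k, q k * (a • f (p k) + b • f (p' k)) :=
        Finset.sum_lt_sum (fun k _ => mul_le_mul_of_nonneg_left (hle k) (hq k).le)
          ⟨j, Finset.mem_univ j, mul_lt_mul_of_pos_left hlt (hq j)⟩
    _ = a • ∑ k, q k * f (p k) + b • ∑ k, q k * f (p' k) := by
        simp only [Finset.smul_sum, ← Finset.sum_add_distrib, mul_add, mul_smul_comm]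

section Strategies

variable [DecidableEq W]

lemma qvec_apply [Fintype W] (od : K → W) (d : W → ℝ) (k : K) : qvec od d k = d (od k) := by
  simp [qvec, Sig, mulVec, dotProduct]

variable [Fintype K] {od : K → W} {p p' : K → ℝ}

lemma Sig_mulVec_apply (od : K → W) (p : K → ℝ) (w : W) :
    (Sig od *ᵥ p) w = ∑ k with od k = w, p k := by
  simp [Sig, mulVec, dotProduct, Finset.sum_filter]

lemma surjective_of_mem_Pset (hp : p ∈ Pset od) : Function.Surjective od := by
  intro w
  by_contra! hw
  have hsum := hp.2 w
  rw [Sig_mulVec_apply, Finset.filter_false_of_mem fun k _ => hw k] at hsum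
  simp at hsum

lemma convex_Pset (od : K → W) : Convex ℝ (Pset od) := by
  refine fun p hp p' hp' a b ha hb hab => ⟨fun k => ?_, fun w => ?_⟩
  · exact add_nonneg (mul_nonneg ha (hp.1 k)) (mul_nonneg hb (hp'.1 k))
  · simp [mulVec_add, mulVec_smul, hp.2 w, hp'.2 w, hab]

variable [Fintype W]

lemma Sig_mulVec_qvec_mul (od : K → W) (a : W → ℝ) (x : K → ℝ) :
    Sig od *ᵥ (qvec od a * x) = a * (Sig od *ᵥ x) := by
  ext w
  rw [Pi.mul_apply, Sig_mulVec_apply, Sig_mulVec_apply, Finset.mul_sum]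
  refine Finset.sum_congr rfl fun k hk => ?_
  rw [Pi.mul_apply, qvec_apply, (Finset.mem_filter.1 hk).2]

lemma qvec_dotProduct_of_mem_Pset (hp : p ∈ Pset od) (d : W → ℝ) :
    qvec od d ⬝ᵥ p = ∑ w, d w := by
  have hone : Sig od *ᵥ p = 1 := funext hp.2
  rw [qvec, mulVec_transpose, ← dotProduct_mulVec, hone, dotProduct_one]

/-- `P` is a product of simplices, so a convex combination may use a different weight for each
OD pair. -/
lemma add_qvec_mul_sub_mem_Pset (hp : p ∈ Pset od) (hp' : p' ∈ Pset od) {a : W → ℝ}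
    (ha : ∀ w, 0 ≤ a w) (ha' : ∀ w, a w ≤ 1) : p + qvec od a * (p' - p) ∈ Pset od := by
  refine ⟨fun k => ?_, fun w => ?_⟩
  · have hcomb : (p + qvec od a * (p' - p)) k = (1 - a (od k)) * p k + a (od k) * p' k := by
      simp only [Pi.add_apply, Pi.mul_apply, Pi.sub_apply, qvec_apply]
      ring
    rw [hcomb]
    exact add_nonneg (mul_nonneg (sub_nonneg.2 (ha' _)) (hp.1 k)) (mul_nonneg (ha _) (hp'.1 k))
  · rw [mulVec_add, Sig_mulVec_qvec_mul, mulVec_sub]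
    simp [hp.2 w, hp'.2 w]

end Strategies

section Logit

variable [Fintype K] [DecidableEq W] {od : K → W}

/-- The normalizing constant of the logit map on the OD pair `w`; it is `0` if no route
serves `w`. -/
def logitPartition (od : K → W) (r : ℝ) (s : K → ℝ) (w : W) : ℝ :=
  ∑ k with od k = w, Real.exp (-r * s k)

lemma logit_apply (od : K → W) (r : ℝ) (s : K → ℝ) (k : K) :
    logit od r s k = Real.exp (-r * s k) / logitPartition od r s (od k) :=
  rfl

lemma logitPartition_pos (od : K → W) (r : ℝ) (s : K → ℝ) (k : K) :
    0 < logitPartition od r s (od k) :=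
  Finset.sum_pos (fun _ _ => Real.exp_pos _) ⟨k, by simp⟩

lemma logit_pos (od : K → W) (r : ℝ) (s : K → ℝ) (k : K) : 0 < logit od r s k :=
  div_pos (Real.exp_pos _) (logitPartition_pos od r s k)

lemma log_logit (od : K → W) (r : ℝ) (s : K → ℝ) (k : K) :
    Real.log (logit od r s k) = -r * s k - Real.log (logitPartition od r s (od k)) := by
  rw [logit_apply, Real.log_div (Real.exp_pos _).ne' (logitPartition_pos od r s k).ne',
    Real.log_exp]

lemma logit_mem_Pset (hod : Function.Surjective od) (r : ℝ) (s : K → ℝ) :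
    logit od r s ∈ Pset od := by
  refine ⟨fun k => (logit_pos od r s k).le, fun w => ?_⟩
  obtain ⟨j, rfl⟩ := hod w
  calc (Sig od *ᵥ logit od r s) (od j)
      = ∑ k with od k = od j, Real.exp (-r * s k) / logitPartition od r s (od j) := by
        rw [Sig_mulVec_apply]
        refine Finset.sum_congr rfl fun k hk => ?_
        rw [logit_apply, (Finset.mem_filter.1 hk).2]
    _ = logitPartition od r s (od j) / logitPartition od r s (od j) := by
        rw [← Finset.sum_div, logitPartition]
    _ = 1 := div_self (logitPartition_pos od r s j).ne'

end Logit

section Entropy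

variable [Fintype K] [Fintype W] [DecidableEq W] {od : K → W} {d : W → ℝ} {p p' : K → ℝ}

lemma strictConvexOn_negEnt (od : K → W) (hd : ∀ w, 0 < d w) :
    StrictConvexOn ℝ (Set.univ.pi fun _ => Set.Ici 0) (negEnt od d) :=
  strictConvexOn_sum_mul_comp_apply (fun k => qvec_apply od d k ▸ hd (od k))
    Real.strictConvexOn_mul_log

lemma KLdiv_nonneg (hd : ∀ w, 0 ≤ d w) (hp : p ∈ Pset od) (hp' : p' ∈ Pset od)
    (hpos : ∀ k, 0 < p' k) : 0 ≤ KLdiv od d p p' :=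
  calc 0 = qvec od d ⬝ᵥ (p - p') := by
        rw [dotProduct_sub, qvec_dotProduct_of_mem_Pset hp, qvec_dotProduct_of_mem_Pset hp',
          sub_self]
    _ ≤ KLdiv od d p p' := Finset.sum_le_sum fun k _ =>
        mul_le_mul_of_nonneg_left (sub_le_mul_log_sub_log (hp.1 k) (hpos k))
          (qvec_apply od d k ▸ hd (od k))

lemma tendsto_KLdiv_self {ι : Type*} {l : Filter ι} {x : ι → K → ℝ} (od : K → W) (d : W → ℝ)
    (hx : Tendsto x l (𝓝 p)) : Tendsto (fun t => KLdiv od d p (x t)) l (𝓝 0) := by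
  rw [← Finset.sum_const_zero (s := (Finset.univ : Finset K))]
  refine tendsto_finsetSum _ fun k _ => ?_
  by_cases hk : p k = 0
  · simp [hk, tendsto_const_nhds]
  · simpa using ((((tendsto_pi_nhds.1 hx k).log hk).const_sub (Real.log (p k))).const_mul
      (p k)).const_mul (qvec od d k)

lemma KLdiv_logit (hp : p ∈ Pset od) (d : W → ℝ) (r : ℝ) (s : K → ℝ) :
    KLdiv od d p (logit od r s) = negEnt od d p + r * (s ⬝ᵥ (qvec od d * p)) +
      ∑ w, d w * Real.log (logitPartition od r s w) := by
  rw [← qvec_dotProduct_of_mem_Pset hp]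
  simp only [KLdiv, negEnt, dotProduct, Finset.mul_sum, ← Finset.sum_add_distrib]
  refine Finset.sum_congr rfl fun k _ => ?_
  rw [log_logit, Pi.mul_apply, qvec_apply, qvec_apply]
  ring

end Entropy

section LinkFlow

variable [Fintype K] [Fintype W] [DecidableEq W] [DecidableEq K]
  {Λ : Matrix A K ℝ} {od : K → W} {d : W → ℝ} {x : A → ℝ} {p p' : K → ℝ}

/-- The strategies that induce the link flow `x`. -/
def flowFiber (Λ : Matrix A K ℝ) (od : K → W) (d : W → ℝ) (x : A → ℝ) : Set (K → ℝ) :=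
  {p ∈ Pset od | bLam Λ od d *ᵥ p = x}

lemma convex_flowFiber (Λ : Matrix A K ℝ) (od : K → W) (d : W → ℝ) (x : A → ℝ) :
    Convex ℝ (flowFiber Λ od d x) :=
  (convex_Pset od).inter ((convex_singleton x).linear_preimage (bLam Λ od d).mulVecLin)

variable [Fintype A]

lemma dotProduct_bLam_mulVec (Λ : Matrix A K ℝ) (od : K → W) (d : W → ℝ) (v : A → ℝ)
    (x : K → ℝ) : v ⬝ᵥ bLam Λ od d *ᵥ x = Λᵀ *ᵥ v ⬝ᵥ (qvec od d * x) := by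
  have hdiag : diagonal (qvec od d) *ᵥ x = qvec od d * x := funext (mulVec_diagonal _ _)
  rw [bLam, ← mulVec_mulVec, hdiag, dotProduct_mulVec, mulVec_transpose]

lemma KLdiv_logit_sub_KLdiv_logit (hp : p ∈ flowFiber Λ od d x) (hp' : p' ∈ flowFiber Λ od d x)
    (r : ℝ) {s : K → ℝ} (hs : s ∈ LinearMap.range Λᵀ.mulVecLin) :
    KLdiv od d p (logit od r s) - KLdiv od d p' (logit od r s) =
      negEnt od d p - negEnt od d p' := by
  obtain ⟨v, rfl⟩ := hs
  rw [KLdiv_logit hp.1, KLdiv_logit hp'.1, mulVecLin_apply, ← dotProduct_bLam_mulVec,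
    ← dotProduct_bLam_mulVec, hp.2, hp'.2]
  ring

section LogitLimit

variable {ι : Type*} {l : Filter ι} [l.NeBot] {r : ℝ} {s : ι → K → ℝ}

lemma isMinOn_negEnt_flowFiber_of_tendsto_logit (hd : ∀ w, 0 ≤ d w)
    (hs : ∀ t, s t ∈ LinearMap.range Λᵀ.mulVecLin)
    (hlim : Tendsto (fun t => logit od r (s t)) l (𝓝 p)) (hp : p ∈ flowFiber Λ od d x) :
    IsMinOn (negEnt od d) (flowFiber Λ od d x) p := by
  intro p' hp'
  have hgap : ∀ t, negEnt od d p - negEnt od d p' ≤ KLdiv od d p (logit od r (s t)) := fun t =>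
    calc negEnt od d p - negEnt od d p'
        = KLdiv od d p (logit od r (s t)) - KLdiv od d p' (logit od r (s t)) :=
          (KLdiv_logit_sub_KLdiv_logit hp hp' r (hs t)).symm
      _ ≤ KLdiv od d p (logit od r (s t)) :=
          sub_le_self _ (KLdiv_nonneg hd hp'.1
            (logit_mem_Pset (surjective_of_mem_Pset hp.1) r (s t)) (logit_pos od r (s t)))
  exact sub_nonpos.1 (ge_of_tendsto' (tendsto_KLdiv_self od d hlim) hgap)

lemma negEnt_lt_of_tendsto_logit (hd : ∀ w, 0 < d w)
    (hs : ∀ t, s t ∈ LinearMap.range Λᵀ.mulVecLin)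
    (hlim : Tendsto (fun t => logit od r (s t)) l (𝓝 p)) (hp : p ∈ flowFiber Λ od d x)
    (hp' : p' ∈ flowFiber Λ od d x) (hne : p' ≠ p) : negEnt od d p < negEnt od d p' := by
  have hmin := isMinOn_negEnt_flowFiber_of_tendsto_logit (fun w => (hd w).le) hs hlim hp
  have hconvex : StrictConvexOn ℝ (flowFiber Λ od d x) (negEnt od d) :=
    (strictConvexOn_negEnt od hd).subset (fun _ h k _ => h.1.1 k) (convex_flowFiber Λ od d x)
  refine lt_of_le_of_ne (hmin hp') fun heq => hne ?_
  have hmin' : IsMinOn (negEnt od d) (flowFiber Λ od d x) p' := fun y hy =>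
    heq.symm.trans_le (hmin hy)
  exact hconvex.eq_of_isMinOn hmin' hmin hp' hp

end LogitLimit

section Equilibrium

variable {u : (A → ℝ) → A → ℝ}

lemma routeCost_dotProduct_qvec_mul_sub_nonneg (hd : ∀ w, 0 ≤ d w) (hp : p ∈ UEset Λ od d u)
    (hp' : p' ∈ Pset od) : 0 ≤ routeCost Λ od d u p ⬝ᵥ (qvec od d * (p' - p)) := by
  set M := 1 + ∑ w, d w
  have hM : 0 < M := add_pos_of_pos_of_nonneg one_pos (Finset.sum_nonneg fun w _ => hd w)
  have hdM : ∀ w, d w ≤ M := fun w =>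
    (Finset.single_le_sum (fun w _ => hd w) (Finset.mem_univ w)).trans
      (le_add_of_nonneg_left zero_le_one)
  -- A step proportional to `d w` on each OD pair `w` puts the demand into the inequality.
  have hmem : p + qvec od (M⁻¹ • d) * (p' - p) ∈ Pset od :=
    add_qvec_mul_sub_mem_Pset hp.1 hp' (fun w => mul_nonneg (inv_nonneg.2 hM.le) (hd w))
      fun w => inv_mul_le_one_of_le₀ (hdM w) hM.le
  have hvi := hp.2 _ hmem
  rw [add_sub_cancel_left, qvec, mulVec_smul, ← qvec, smul_mul_assoc, dotProduct_smul] at hvi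
  exact (mul_nonneg_iff_of_pos_left (inv_pos.2 hM)).1 hvi

lemma linkCost_dotProduct_flow_sub_nonneg (hd : ∀ w, 0 ≤ d w) (hp : p ∈ UEset Λ od d u)
    (hp' : p' ∈ Pset od) :
    0 ≤ u (bLam Λ od d *ᵥ p) ⬝ᵥ (bLam Λ od d *ᵥ p' - bLam Λ od d *ᵥ p) := by
  rw [← mulVec_sub, dotProduct_bLam_mulVec]
  exact routeCost_dotProduct_qvec_mul_sub_nonneg hd hp hp'

lemma bLam_mulVec_eq_of_mem_UEset (hd : ∀ w, 0 ≤ d w)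
    (hmono : ∀ x ∈ Xset Λ od d, ∀ x' ∈ Xset Λ od d, x ≠ x' → 0 < (u x - u x') ⬝ᵥ (x - x'))
    (hp : p ∈ UEset Λ od d u) (hp' : p' ∈ UEset Λ od d u) :
    bLam Λ od d *ᵥ p = bLam Λ od d *ᵥ p' := by
  by_contra hne
  have hpos := hmono _ ⟨p, hp.1, rfl⟩ _ ⟨p', hp'.1, rfl⟩ hne
  have hvi := linkCost_dotProduct_flow_sub_nonneg hd hp hp'.1
  have hvi' := linkCost_dotProduct_flow_sub_nonneg hd hp' hp.1
  simp only [sub_dotProduct, dotProduct_sub] at hpos hvi hvi'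
  linarith

lemma valuation_mem_range {η : ℕ → ℝ} {s p : ℕ → K → ℝ}
    (hs0 : s 0 ∈ LinearMap.range Λᵀ.mulVecLin)
    (hsdyn : ∀ t, s (t + 1) = s t + η (t + 1) • routeCost Λ od d u (p t)) (t : ℕ) :
    s t ∈ LinearMap.range Λᵀ.mulVecLin := by
  induction t with
  | zero => exact hs0
  | succ t ih =>
    rw [hsdyn]
    exact add_mem ih (Submodule.smul_mem _ _ (LinearMap.mem_range_self Λᵀ.mulVecLin _))

theorem statement11_general (hd : ∀ w, 0 < d w)
    (hmono : ∀ x ∈ Xset Λ od d, ∀ x' ∈ Xset Λ od d, x ≠ x' → 0 < (u x - u x') ⬝ᵥ (x - x'))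
    {r : ℝ} {η : ℕ → ℝ} {s p : ℕ → K → ℝ}
    (hs0 : s 0 ∈ LinearMap.range Λᵀ.mulVecLin)
    (hsdyn : ∀ t, s (t + 1) = s t + η (t + 1) • routeCost Λ od d u (p t))
    (hpdyn : ∀ t, p t = logit od r (s t))
    {pstar : K → ℝ} (hUE : pstar ∈ UEset Λ od d u) (hconv : Tendsto p atTop (𝓝 pstar)) :
    ∀ p' ∈ UEset Λ od d u, p' ≠ pstar → negEnt od d pstar < negEnt od d p' := by
  intro p' hp' hne
  have hflow : bLam Λ od d *ᵥ p' = bLam Λ od d *ᵥ pstar :=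
    bLam_mulVec_eq_of_mem_UEset (fun w => (hd w).le) hmono hp' hUE
  have hrange := valuation_mem_range hs0 hsdyn
  obtain rfl : p = fun t => logit od r (s t) := funext hpdyn
  exact negEnt_lt_of_tendsto_logit hd hrange hconv ⟨hUE.1, rfl⟩ ⟨hp'.1, hflow⟩ hne

end Equilibrium

end LinkFlow

/-- Proposition 5, MEUE affirmation condition (A): if the initial
route valuation of the CULO model is `s⁰ = 0` (so the initial strategy is the equal
distribution) and the iterates converge to `p* ∈ P*`, then `p*` is the MEUE strategy,
i.e. the unique minimizer of the negative entropy `φ` over `P*`. -/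
theorem statement11
    [Fintype A] [Fintype W] [Fintype K] [DecidableEq W] [DecidableEq K]
    (Λ : Matrix A K ℝ) (od : K → W) (d : W → ℝ)
    (hΛ : ∀ a k, Λ a k = 0 ∨ Λ a k = 1)
    (hd : ∀ w, 0 < d w)
    (u : (A → ℝ) → (A → ℝ))
    (hu : ContDiffOn ℝ 1 u (Xset Λ od d))
    (hnonneg : ∀ x ∈ Xset Λ od d, ∀ a, 0 ≤ u x a)
    (hmono : ∀ x ∈ Xset Λ od d, ∀ x' ∈ Xset Λ od d, x ≠ x' →
      0 < (u x - u x') ⬝ᵥ (x - x'))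
    (r : ℝ) (hr : 0 < r)
    (η : ℕ → ℝ) (hη : ∀ t, 0 < η t)
    (s : ℕ → K → ℝ) (p : ℕ → K → ℝ)
    (hs0 : s 0 = 0)
    (hsdyn : ∀ t, s (t + 1) = s t + η (t + 1) • routeCost Λ od d u (p t))
    (hpdyn : ∀ t, p t = logit od r (s t))
    (pstar : K → ℝ) (hUE : pstar ∈ UEset Λ od d u)
    (hconv : Tendsto p atTop (nhds pstar)) :
    ∀ p' ∈ UEset Λ od d u, p' ≠ pstar → negEnt od d pstar < negEnt od d p' :=
  statement11_general hd hmono (hs0 ▸ zero_mem _) hsdyn hpdyn hUE hconv
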